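/- Let κ > -1 and ρ > -1 be real and let m, n be nonnegative integers. Set H(t) := (κ+m+1) + ρ - ρ/t and Z(z,w) := Z^{κ,ρ}_{m,n}(z,w). Then at every (z,w) ∈ ℂ² with z ≠ 0 and w ≠ 0, the fractional Zernike function satisfies the eigenvalue equation -(1-zw)² · ∂²Z/∂z∂w - (1-zw)·(m·z·∂Z/∂z - H(zw)·w·∂Z/∂w) + m·H(zw)·zw·Z = m(κ+m+1)·Z, where ∂/∂z and ∂/∂w are complex partial derivatives in the respective variable with the other held fixed. (Substituting w = conj z, this says Z^{κ,ρ}_{m,n}(z, conj z) is an eigenfunction of the perturbed magnetic Laplacian -(1-|z|²)²∂∂̄ - (1-|z|²)(m E - H(|z|²) Ē) + m H(|z|²)|z|² with eigenvalue m(κ+m+1).) -/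

import Mathlib

open Complex Finset

/-- The fractional Zernike function `Z^{κ,ρ}_{m,n}(z,w)`, viewed as a function of two
independent complex variables. -/
noncomputable def fracZernike (κ ρ : ℝ) (m n : ℕ) (z w : ℂ) : ℂ :=
  ∑ j ∈ Finset.range (m + 1),
    ((-1 : ℂ) ^ j * (Nat.factorial m : ℂ) * Complex.Gamma ((n : ℂ) + ρ + 1) *
        Complex.Gamma ((κ : ℂ) + m + 1) /
      ((Nat.factorial j : ℂ) * (Nat.factorial (m - j) : ℂ) *
        Complex.Gamma ((n : ℂ) + ρ - j + 1) * Complex.Gamma ((κ : ℂ) + j + 1))) *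
    (1 - z * w) ^ j * z ^ ((n : ℤ) - (j : ℤ)) * w ^ (m - j)


/-- The potential `H(t) = (κ+m+1) + ρ - ρ/t`. -/
noncomputable def Hpot (κ ρ : ℝ) (m : ℕ) (t : ℂ) : ℂ := ((κ : ℂ) + m + 1) + ρ - (ρ : ℂ) / t

/-!
In the coordinate `x = 1 - 1/(zw)`, the fractional Zernike function is `z^n w^m p(x)` with `p` a
multiple of the hypergeometric polynomial `₂F₁(-m, -(n+ρ); κ+1; x)`. As `z ∂x/∂z = w ∂x/∂w = 1 - x`,
the gauge `p ↦ z^n w^m p(x)` turns the Euler operators `E`, `Ē` into `n + (1-x) d/dx` and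
`m + (1-x) d/dx`. It thereby turns the perturbed magnetic Laplacian minus `m(κ+m+1)` into `-x` times
Gauss's hypergeometric operator, which annihilates `p`.
-/

open Polynomial Topology

section GaussOperator

variable {R : Type*} [CommRing R]

/-- Gauss's hypergeometric operator `x(1-x) d²/dx² + (c - (a+b+1)x) d/dx - ab` on polynomials. -/
noncomputable def gaussOperator (a b c : R) (p : R[X]) : R[X] :=
  X * (1 - X) * derivative (derivative p) + (C c - C (a + b + 1) * X) * derivative p
    - C (a * b) * p

/-- The operator `k + (1-x) d/dx`, which the gauge `gaugedEval` conjugates to an Euler operator. -/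
noncomputable def eulerTwist (k : R) (p : R[X]) : R[X] :=
  C k * p + (1 - X) * derivative p

theorem coeff_gaussOperator (a b c : R) (p : R[X]) (j : ℕ) :
    (gaussOperator a b c p).coeff j =
      (j + 1) * (j + c) * p.coeff (j + 1) - (j + a) * (j + b) * p.coeff j := by
  have expand : gaussOperator a b c p =
      X * derivative (derivative p) - X * (X * derivative (derivative p)) + C c * derivative p
        - C (a + b + 1) * (X * derivative p) - C (a * b) * p := by
    rw [gaussOperator]; ring
  rw [expand]
  rcases j with _ | _ | j
  all_goals
    simp only [coeff_sub, coeff_add, coeff_C_mul, coeff_X_mul, coeff_X_mul_zero, coeff_derivative]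
    push_cast
    ring

theorem gaussOperator_eq_zero_of_coeff {a b c : R} {p : R[X]}
    (h : ∀ j : ℕ, (j + 1) * (j + c) * p.coeff (j + 1) = (j + a) * (j + b) * p.coeff j) :
    gaussOperator a b c p = 0 := by
  ext j
  rw [coeff_gaussOperator, h, sub_self, coeff_zero]

-- With `x = 1 - 1/(zw)` and gauged functions, the left side is `(1-x)/x` times the perturbed
-- magnetic Laplacian, with `H(t) = A + ρ - ρ/t`, minus `m A`.
theorem eulerTwist_combination_eq_gaussOperator (m n A ρ : R) (p : R[X]) :
    C m * eulerTwist n p - (C A + C ρ * X) * eulerTwist m p - X * eulerTwist n (eulerTwist m p)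
        + C (m * (A + ρ)) * p =
      -((1 - X) * gaussOperator (-m) (-(n + ρ)) (A - m) p) := by
  simp only [eulerTwist, gaussOperator, derivative_add, derivative_mul, derivative_sub,
    derivative_C, derivative_one, derivative_X, C_add, C_mul, C_sub, C_neg, C_1]
  ring

end GaussOperator

section Gauge

variable {𝕜 : Type*} [NontriviallyNormedField 𝕜]

/-- The function `z^n w^m p(1 - 1/(zw))`: the gauge transform, together with a change of variables,
that reduces the perturbed magnetic Laplacian to an ordinary differential operator on `p`. -/
noncomputable def gaugedEval (n m : ℤ) (p : 𝕜[X]) (z w : 𝕜) : 𝕜 :=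
  z ^ n * w ^ m * p.eval (1 - (z * w)⁻¹)

/-- The perturbed magnetic Laplacian `-(1-zw)² ∂²/∂z∂w - (1-zw)(μ E - H(zw) Ē) + μ H(zw) zw`
with potential `H`, where `w` is independent of `z` and stands for its conjugate. -/
noncomputable def perturbedLaplacian (μ : 𝕜) (H : 𝕜 → 𝕜) (F : 𝕜 → 𝕜 → 𝕜) (z w : 𝕜) : 𝕜 :=
  -(1 - z * w) ^ 2 * deriv (fun z' => deriv (fun w' => F z' w') w) z
    - (1 - z * w) *
        (μ * z * deriv (fun z' => F z' w) z - H (z * w) * w * deriv (fun w' => F z w') w)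
    + μ * H (z * w) * (z * w) * F z w

theorem perturbedLaplacian_congr {μ : 𝕜} {H : 𝕜 → 𝕜} {F G : 𝕜 → 𝕜 → 𝕜} {z w : 𝕜}
    (h : F.uncurry =ᶠ[𝓝 (z, w)] G.uncurry) :
    perturbedLaplacian μ H F z w = perturbedLaplacian μ H G z w := by
  have deriv_w : (fun z' => deriv (F z') w) =ᶠ[𝓝 z] fun z' => deriv (G z') w := by
    filter_upwards [h.curry_nhds] with z' hz' using Filter.EventuallyEq.deriv_eq hz'
  have slice_z : (fun z' => F z' w) =ᶠ[𝓝 z] fun z' => G z' w := by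
    filter_upwards [h.curry_nhds] with z' hz' using hz'.self_of_nhds
  have slice_zw : F z w = G z w := h.self_of_nhds
  simp only [perturbedLaplacian, deriv_w.deriv_eq, slice_z.deriv_eq, deriv_w.self_of_nhds,
    slice_zw]

theorem gaugedEval_swap (n m : ℤ) (p : 𝕜[X]) (z w : 𝕜) :
    gaugedEval n m p z w = gaugedEval m n p w z := by
  rw [gaugedEval, gaugedEval, mul_comm z w, mul_comm (z ^ n)]

theorem hasDerivAt_gaugedEval_right (n m : ℤ) (p : 𝕜[X]) (z : 𝕜) {w : 𝕜} (hw : w ≠ 0) :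
    HasDerivAt (fun w' => gaugedEval n m p z w')
      (gaugedEval n m (eulerTwist (m : 𝕜) p) z w / w) w := by
  have inner : HasDerivAt (fun w' => 1 - (z * w')⁻¹) ((z * w)⁻¹ / w) w := by
    simp only [mul_inv]
    refine (((hasDerivAt_inv hw).const_mul z⁻¹).const_sub 1).congr_deriv ?_
    field_simp
  have power : HasDerivAt (fun w' => z ^ n * w' ^ m) (z ^ n * (m * (w ^ m * w⁻¹))) w := by
    rw [← zpow_sub_one₀ hw m]
    exact (hasDerivAt_zpow m w (Or.inl hw)).const_mul _
  refine (power.mul ((p.hasDerivAt _).comp w inner)).congr_deriv ?_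
  simp only [gaugedEval, eulerTwist, Function.comp_apply, eval_add, eval_mul, eval_sub, eval_C,
    eval_one, eval_X]
  ring

theorem hasDerivAt_gaugedEval_left (n m : ℤ) (p : 𝕜[X]) {z : 𝕜} (hz : z ≠ 0) (w : 𝕜) :
    HasDerivAt (fun z' => gaugedEval n m p z' w)
      (gaugedEval n m (eulerTwist (n : 𝕜) p) z w / z) z := by
  simp only [gaugedEval_swap n m]
  exact hasDerivAt_gaugedEval_right m n p w hz

theorem deriv_deriv_gaugedEval (n m : ℤ) (p : 𝕜[X]) {z w : 𝕜} (hz : z ≠ 0) (hw : w ≠ 0) :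
    deriv (fun z' => deriv (fun w' => gaugedEval n m p z' w') w) z =
      gaugedEval n m (eulerTwist (n : 𝕜) (eulerTwist (m : 𝕜) p)) z w / (z * w) := by
  simp only [(hasDerivAt_gaugedEval_right n m p _ hw).deriv, deriv_div_const,
    (hasDerivAt_gaugedEval_left n m _ hz w).deriv, div_div]

theorem perturbedLaplacian_gaugedEval (n m : ℤ) (A ρ : 𝕜) (p : 𝕜[X]) {z w : 𝕜}
    (hz : z ≠ 0) (hw : w ≠ 0) :
    perturbedLaplacian (m : 𝕜) (fun t => A + ρ - ρ / t) (gaugedEval n m p) z w =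
      m * A * gaugedEval n m p z w
        - gaugedEval n m (X * gaussOperator (-m : 𝕜) (-(n + ρ)) (A - m) p) z w := by
  have identity := congrArg (eval (1 - (z * w)⁻¹))
    (eulerTwist_combination_eq_gaussOperator (m : 𝕜) n A ρ p)
  simp only [eval_add, eval_sub, eval_mul, eval_neg, eval_C, eval_X, eval_one] at identity
  rw [perturbedLaplacian, deriv_deriv_gaugedEval n m p hz hw,
    (hasDerivAt_gaugedEval_left n m p hz w).deriv, (hasDerivAt_gaugedEval_right n m p z hw).deriv]
  simp only [gaugedEval, eval_mul, eval_X]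
  generalize eval _ (gaussOperator _ _ _ p) = g at identity ⊢
  generalize eval _ (eulerTwist (n : 𝕜) p) = e₁ at identity ⊢
  generalize eval _ (eulerTwist (n : 𝕜) _) = e₂ at identity ⊢
  generalize eval _ (eulerTwist (m : 𝕜) p) = e₃ at identity ⊢
  generalize eval _ p = u at identity ⊢
  field_simp at identity ⊢
  linear_combination (z * w - 1) * identity

end Gauge

section FractionalZernike

/-- The coefficients of the fractional Zernike function in powers of `1 - 1/(zw)`, with `β = n + ρ`;
the sign `(-1)^j` is absorbed by the variable. As `Gamma` is `0` at its poles in Mathlib, the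
inverses are the entire function `1/Γ`. -/
noncomputable def zernikeCoeff (κ β : ℂ) (m j : ℕ) : ℂ :=
  m.choose j * (Gamma (β + 1) * (Gamma (β - j + 1))⁻¹) * (Gamma (κ + m + 1) * (Gamma (κ + j + 1))⁻¹)

/-- The radial part of the fractional Zernike function as a polynomial in `1 - 1/(zw)`, with
`β = n + ρ`: a multiple of `₂F₁(-m, -β; κ+1; x)` unless `κ` is a negative integer. -/
noncomputable def zernikePoly (κ β : ℂ) (m : ℕ) : ℂ[X] :=
  ∑ j ∈ range (m + 1), C (zernikeCoeff κ β m j) * X ^ j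

theorem zernikeCoeff_succ (κ β : ℂ) (m j : ℕ) :
    (j + 1) * (j + (κ + 1)) * zernikeCoeff κ β m (j + 1) =
      (j + -m) * (j + -β) * zernikeCoeff κ β m j := by
  have choose_succ : (m.choose (j + 1) : ℂ) * (j + 1) = m.choose j * (m - j) := by
    rcases le_or_gt j m with hj | hj
    · rw [← Nat.cast_sub hj]
      exact_mod_cast Nat.choose_succ_right_eq m j
    · simp [Nat.choose_eq_zero_of_lt, hj, hj.trans (Nat.lt_succ_self j)]
  have Gamma_β := one_div_Gamma_eq_self_mul_one_div_Gamma_add_one (β - j)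
  have Gamma_κ := one_div_Gamma_eq_self_mul_one_div_Gamma_add_one (κ + j + 1)
  have shift_β : β - (j + 1 : ℕ) + 1 = β - j := by push_cast; ring
  have shift_κ : κ + (j + 1 : ℕ) + 1 = κ + j + 1 + 1 := by push_cast; ring
  rw [zernikeCoeff, zernikeCoeff, shift_β, shift_κ, Gamma_β, Gamma_κ]
  linear_combination (Gamma (β + 1) * (β - j) * (Gamma (β - j + 1))⁻¹ * Gamma (κ + m + 1)
    * (κ + j + 1) * (Gamma (κ + j + 1 + 1))⁻¹) * choose_succ

theorem coeff_zernikePoly (κ β : ℂ) (m j : ℕ) :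
    (zernikePoly κ β m).coeff j = zernikeCoeff κ β m j := by
  rw [zernikePoly, finsetSum_coeff]
  simp only [coeff_C_mul_X_pow, sum_ite_eq, mem_range, ite_eq_left_iff, not_lt]
  intro hj
  simp [zernikeCoeff, Nat.choose_eq_zero_of_lt (Nat.lt_of_succ_le hj)]

theorem gaussOperator_zernikePoly (κ β : ℂ) (m : ℕ) :
    gaussOperator (-m : ℂ) (-β) (κ + 1) (zernikePoly κ β m) = 0 :=
  gaussOperator_eq_zero_of_coeff fun j => by
    simpa only [coeff_zernikePoly] using zernikeCoeff_succ κ β m j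

theorem perturbedLaplacian_gaugedEval_zernikePoly (κ ρ : ℂ) (m : ℕ) (n : ℤ) {z w : ℂ}
    (hz : z ≠ 0) (hw : w ≠ 0) :
    perturbedLaplacian (m : ℂ) (fun t => κ + m + 1 + ρ - ρ / t)
        (gaugedEval n m (zernikePoly κ (n + ρ) m)) z w =
      m * (κ + m + 1) * gaugedEval n m (zernikePoly κ (n + ρ) m) z w := by
  have parameter : κ + m + 1 - m = κ + 1 := by ring
  have intertwine := perturbedLaplacian_gaugedEval n m (κ + m + 1) ρ
    (zernikePoly κ (n + ρ) m) hz hw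
  rw [Int.cast_natCast, parameter, gaussOperator_zernikePoly] at intertwine
  simpa only [gaugedEval, mul_zero, eval_zero, sub_zero] using intertwine

theorem fracZernike_eq_gaugedEval (κ ρ : ℝ) (m n : ℕ) {z w : ℂ} (hz : z ≠ 0) (hw : w ≠ 0) :
    fracZernike κ ρ m n z w = gaugedEval n m (zernikePoly κ (n + ρ) m) z w := by
  rw [fracZernike, gaugedEval, zernikePoly, eval_finsetSum, mul_sum]
  refine sum_congr rfl fun j hj => ?_
  have hjm : j ≤ m := Nat.lt_succ_iff.mp (mem_range.mp hj)
  have sign : 1 - (z * w)⁻¹ = -1 * (1 - z * w) * (z * w)⁻¹ := by field_simp; ring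
  rw [zernikeCoeff, Nat.cast_choose ℂ hjm, eval_mul, eval_C, eval_pow, eval_X, sign, mul_pow,
    mul_pow, inv_pow, mul_pow, zpow_sub₀ hz, zpow_natCast, zpow_natCast, zpow_natCast,
    pow_sub₀ w hw hjm]
  simp only [div_eq_mul_inv, mul_inv]
  ring

end FractionalZernike

theorem fracZernike_eigen_general (κ ρ : ℝ) (m n : ℕ) (z w : ℂ) (hz : z ≠ 0) (hw : w ≠ 0) :
    -(1 - z * w) ^ 2 * deriv (fun z' => deriv (fun w' => fracZernike κ ρ m n z' w') w) z
      - (1 - z * w) *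
          ((m : ℂ) * z * deriv (fun z' => fracZernike κ ρ m n z' w) z
            - Hpot κ ρ m (z * w) * w * deriv (fun w' => fracZernike κ ρ m n z w') w)
      + (m : ℂ) * Hpot κ ρ m (z * w) * (z * w) * fracZernike κ ρ m n z w
    = (m : ℂ) * ((κ : ℂ) + m + 1) * fracZernike κ ρ m n z w := by
  have gauge : (fracZernike κ ρ m n).uncurry =ᶠ[𝓝 (z, w)]
      (gaugedEval n m (zernikePoly κ (n + ρ) m)).uncurry := by
    filter_upwards [prod_mem_nhds (isOpen_ne.mem_nhds hz) (isOpen_ne.mem_nhds hw)]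
      with ⟨z', w'⟩ ⟨hz', hw'⟩ using fracZernike_eq_gaugedEval κ ρ m n hz' hw'
  calc perturbedLaplacian (m : ℂ) (Hpot κ ρ m) (fracZernike κ ρ m n) z w
      = perturbedLaplacian (m : ℂ) (Hpot κ ρ m) (gaugedEval n m (zernikePoly κ (n + ρ) m)) z w :=
        perturbedLaplacian_congr gauge
    _ = m * (κ + m + 1) * gaugedEval n m (zernikePoly κ (n + ρ) m) z w := by
        rw [← Int.cast_natCast n]
        exact perturbedLaplacian_gaugedEval_zernikePoly κ ρ m n hz hw
    _ = m * (κ + m + 1) * fracZernike κ ρ m n z w := by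
        rw [fracZernike_eq_gaugedEval κ ρ m n hz hw]

/-- The fractional Zernike functions are eigenfunctions of the perturbed magnetic Laplacian
`-(1-zw)² ∂²/∂z∂w - (1-zw)(m E - H(zw) Ē) + m H(zw) zw` with eigenvalue `m(κ+m+1)`. -/
theorem fracZernike_eigen (κ ρ : ℝ) (hκ : -1 < κ) (hρ : -1 < ρ) (m n : ℕ) (z w : ℂ)
    (hz : z ≠ 0) (hw : w ≠ 0) :
    -(1 - z * w) ^ 2 * deriv (fun z' => deriv (fun w' => fracZernike κ ρ m n z' w') w) z
      - (1 - z * w) *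
          ((m : ℂ) * z * deriv (fun z' => fracZernike κ ρ m n z' w) z
            - Hpot κ ρ m (z * w) * w * deriv (fun w' => fracZernike κ ρ m n z w') w)
      + (m : ℂ) * Hpot κ ρ m (z * w) * (z * w) * fracZernike κ ρ m n z w
    = (m : ℂ) * ((κ : ℂ) + m + 1) * fracZernike κ ρ m n z w :=
  fracZernike_eigen_general κ ρ m n z w hz hw
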